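/- arXiv:1811.07586 — 10 statements merged into one kernel-verified Lean document; each statement's English description precedes it below -/
import Mathlib

section
/- Let U and V be real Banach spaces, let A : U → (V →L[ℝ] ℝ) and J : U → ℝ be three times continuously Fréchet differentiable, let u ∈ U satisfy A(u) = 0 (i.e. A(u)(v) = 0 for all v ∈ V), and let z ∈ V satisfy the adjoint equation A'(u)(φ)(z) = J'(u)(φ) for all φ ∈ U. Then for every ũ ∈ U and z̃ ∈ V, with e := u − ũ and e* := z − z̃, the error representation J(u) − J(ũ) = (1/2)·ρ(ũ)(z − z̃) + (1/2)·ρ*(ũ, z̃)(u − ũ) + ρ(ũ)(z̃) + 𝓡^{(3)} holds, where ρ(ũ)(φ) := −A(ũ)(φ), ρ*(ũ, z̃)(ψ) := J'(ũ)(ψ) − A'(ũ)(ψ)(z̃), and 𝓡^{(3)} := (1/2)·∫₀¹ [ J'''(ũ + s e)(e,e,e) − A'''(ũ + s e)(e,e,e)(z̃ + s e*) − 3·A''(ũ + s e)(e,e)(e*) ] · s·(s − 1) ds. -/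
/-!
Let `L(w, y) = J(w) - A(w)(y)` be the Lagrangian and let `g(s) = L(ũ + s e, z̃ + s e*)`, so that `g` is
three times continuously differentiable on `[0, 1]`. The state equation and the adjoint equation say
that `(u, z)` is a critical point of `L`, i.e. `g'(1) = 0`; moreover `g(1) = J(u)`. The claim is the
trapezoidal rule with its exact remainder,
`g(1) - g(0) = (g'(0) + g'(1)) / 2 + (1/2) ∫₀¹ g'''(s) s (s - 1) ds` (`trapezoid_remainder`),
in which `g'''` comes from the Leibniz rule applied to the pairing of `A` along the segment with the
affine path `z̃ + s e*`; the second derivative of that path vanishes, which leaves the factor `3` in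
front of the mixed term.
-/

open intervalIntegral

/-- The trapezoidal rule on `[0, 1]` with its exact integral remainder. -/
lemma trapezoid_remainder {g g₁ g₂ g₃ : ℝ → ℝ}
    (h₀ : ∀ s, HasDerivAt g (g₁ s) s) (h₁ : ∀ s, HasDerivAt g₁ (g₂ s) s)
    (h₂ : ∀ s, HasDerivAt g₂ (g₃ s) s) (h₃ : Continuous g₃) :
    g 1 - g 0 = (1/2) * (g₁ 0 + g₁ 1) + (1/2) * ∫ s in (0:ℝ)..1, g₃ s * (s * (s - 1)) := by
  -- Integrating by parts twice amounts to this explicit antiderivative.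
  have key : ∀ s, HasDerivAt (fun s => g₂ s * (s * (s - 1)) - g₁ s * (2 * s - 1) + 2 * g s)
      (g₃ s * (s * (s - 1))) s := by
    intro s
    have hq : HasDerivAt (fun s : ℝ => s * (s - 1)) (2 * s - 1) s :=
      ((hasDerivAt_id' s).mul ((hasDerivAt_id' s).sub_const 1)).congr_deriv (by ring)
    have hl : HasDerivAt (fun s : ℝ => 2 * s - 1) 2 s :=
      (((hasDerivAt_id' s).const_mul 2).sub_const 1).congr_deriv (by ring)
    exact ((((h₂ s).mul hq).sub ((h₁ s).mul hl)).add ((h₀ s).const_mul 2)).congr_deriv (by ring)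
  have hc : Continuous fun s => g₃ s * (s * (s - 1)) := by fun_prop
  rw [integral_eq_sub_of_hasDerivAt (fun s _ => key s) (hc.intervalIntegrable 0 1)]
  ring

section Line

variable {U F : Type*} [NormedAddCommGroup U] [NormedSpace ℝ U]
  [NormedAddCommGroup F] [NormedSpace ℝ F] {f : U → F}

/-- Each derivative of `f` in the fixed direction `e`, restricted to the line through `x` with that
direction, has the next one as its derivative. -/
lemma hasDerivAt_iteratedFDeriv_line {n : WithTop ℕ∞} {k : ℕ} (hf : ContDiff ℝ n f)
    (hk : (k : WithTop ℕ∞) < n) (x e : U) (s : ℝ) :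
    HasDerivAt (fun s : ℝ => iteratedFDeriv ℝ k f (x + s • e) fun _ => e)
      (iteratedFDeriv ℝ (k + 1) f (x + s • e) fun _ => e) s := by
  have hline : HasDerivAt (fun s : ℝ => x + s • e) e s := by
    simpa using ((hasDerivAt_id' s).smul_const e).const_add x
  have hd := ((hf.differentiable_iteratedFDeriv hk) (x + s • e)).hasFDerivAt
  have hcomp := hd.comp_hasDerivAt s hline
  exact ((ContinuousMultilinearMap.apply ℝ (fun _ : Fin k => U) F fun _ => e).hasFDerivAt
    (x := iteratedFDeriv ℝ k f (x + s • e))).comp_hasDerivAt s hcomp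

lemma continuous_iteratedFDeriv_line {n : WithTop ℕ∞} {k : ℕ} (hf : ContDiff ℝ n f)
    (hk : (k : WithTop ℕ∞) ≤ n) (x e : U) :
    Continuous fun s : ℝ => iteratedFDeriv ℝ k f (x + s • e) fun _ => e := by
  have h := (hf.continuous_iteratedFDeriv hk).comp
    (by fun_prop : Continuous fun s : ℝ => x + s • e)
  exact (ContinuousMultilinearMap.apply ℝ (fun _ : Fin k => U) F fun _ => e).continuous.comp h

end Line

/-- DWR error representation (Theorem 1 of the paper). -/
theorem dwr_error_representation
    {U V : Type*} [NormedAddCommGroup U] [NormedSpace ℝ U] [CompleteSpace U]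
    [NormedAddCommGroup V] [NormedSpace ℝ V] [CompleteSpace V]
    (A : U → (V →L[ℝ] ℝ)) (J : U → ℝ)
    (hA : ContDiff ℝ 3 A) (hJ : ContDiff ℝ 3 J)
    (u : U) (hu : ∀ v : V, A u v = 0)
    (z : V) (hz : ∀ φ : U, fderiv ℝ A u φ z = fderiv ℝ J u φ)
    (ut : U) (zt : V) :
    J u - J ut =
      (1/2) * (-(A ut (z - zt)))
      + (1/2) * (fderiv ℝ J ut (u - ut) - fderiv ℝ A ut (u - ut) zt)
      + (-(A ut zt))
      + (1/2) * ∫ s in (0:ℝ)..1,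
          (iteratedFDeriv ℝ 3 J (ut + s • (u - ut)) ![u - ut, u - ut, u - ut]
            - iteratedFDeriv ℝ 3 A (ut + s • (u - ut)) ![u - ut, u - ut, u - ut]
                (zt + s • (z - zt))
            - 3 * iteratedFDeriv ℝ 2 A (ut + s • (u - ut)) ![u - ut, u - ut] (z - zt))
          * (s * (s - 1)) := by
  have hue : ut + (u - ut) = u := by abel
  have hze : zt + (z - zt) = z := by abel
  set e := u - ut
  set d := z - zt
  have e3 : ![e, e, e] = fun _ => e := by ext i; fin_cases i <;> rfl
  have e2 : ![e, e] = fun _ => e := by ext i; fin_cases i <;> rfl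
  rw [e3, e2]
  let a (k : ℕ) (s : ℝ) : V →L[ℝ] ℝ := iteratedFDeriv ℝ k A (ut + s • e) fun _ => e
  let j (k : ℕ) (s : ℝ) : ℝ := iteratedFDeriv ℝ k J (ut + s • e) fun _ => e
  let y (s : ℝ) : V := zt + s • d
  have ha (k : ℕ) (hk : k < 3) (s : ℝ) : HasDerivAt (a k) (a (k + 1) s) s :=
    hasDerivAt_iteratedFDeriv_line hA (by exact_mod_cast hk) ut e s
  have hj (k : ℕ) (hk : k < 3) (s : ℝ) : HasDerivAt (j k) (j (k + 1) s) s :=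
    hasDerivAt_iteratedFDeriv_line hJ (by exact_mod_cast hk) ut e s
  have hy (s : ℝ) : HasDerivAt y d s := by
    exact (((hasDerivAt_id' s).smul_const d).const_add zt).congr_deriv (one_smul ℝ d)
  have hay (k : ℕ) (hk : k < 3) (s : ℝ) :
      HasDerivAt (fun s => a k s (y s)) (a (k + 1) s (y s) + a k s d) s :=
    (ha k hk s).clm_apply (hy s)
  have had (k : ℕ) (hk : k < 3) (s : ℝ) :
      HasDerivAt (fun s => a k s d) (a (k + 1) s d) s := by
    simpa using (ha k hk s).clm_apply (hasDerivAt_const s d)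
  have h₀ (s : ℝ) : HasDerivAt (fun s => j 0 s - a 0 s (y s))
      (j 1 s - a 1 s (y s) - a 0 s d) s :=
    ((hj 0 (by norm_num) s).sub (hay 0 (by norm_num) s)).congr_deriv (by ring)
  have h₁ (s : ℝ) : HasDerivAt (fun s => j 1 s - a 1 s (y s) - a 0 s d)
      (j 2 s - a 2 s (y s) - 2 * a 1 s d) s :=
    (((hj 1 (by norm_num) s).sub (hay 1 (by norm_num) s)).sub
      (had 0 (by norm_num) s)).congr_deriv (by ring)
  have h₂ (s : ℝ) : HasDerivAt (fun s => j 2 s - a 2 s (y s) - 2 * a 1 s d)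
      (j 3 s - a 3 s (y s) - 3 * a 2 s d) s :=
    (((hj 2 (by norm_num) s).sub (hay 2 (by norm_num) s)).sub
      ((had 1 (by norm_num) s).const_mul 2)).congr_deriv (by ring)
  have h₃ : Continuous fun s => j 3 s - a 3 s (y s) - 3 * a 2 s d := by
    have c1 : Continuous (j 3) := continuous_iteratedFDeriv_line hJ (by norm_num) ut e
    have c2 : Continuous (a 3) := continuous_iteratedFDeriv_line hA (by norm_num) ut e
    have c3 : Continuous (a 2) := continuous_iteratedFDeriv_line hA (by norm_cast) ut e
    have c4 : Continuous y := by fun_prop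
    exact (c1.sub (c2.clm_apply c4)).sub (continuous_const.mul (c3.clm_apply continuous_const))
  -- At `s = 1` the equations for `u` and `z` turn `g'(1)` into zero.
  have main := trapezoid_remainder h₀ h₁ h₂ h₃
  simp only [a, j, y, iteratedFDeriv_zero_apply, iteratedFDeriv_one_apply, one_smul, zero_smul,
    add_zero, hue, hze, hu, hz] at main
  linarith
end

section
/- Let Ju, Jũ, Juh2 be real numbers, set η^{(2)} := Juh2 − Jũ, and let b_h, b₀ be real numbers with 0 ≤ b_h < b₀ < 1. If the saturation assumption |Ju − Juh2| < b_h·|Ju − Jũ| holds, then (1/(1 + b_h))·|η^{(2)}| ≤ |Ju − Jũ| ≤ (1/(1 − b_h))·|η^{(2)}| and (1/(1 + b₀))·|η^{(2)}| ≤ |Ju − Jũ| ≤ (1/(1 − b₀))·|η^{(2)}|. -/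
/-!
By the triangle inequality, the error `|Ju - Jut|` and the estimator `|Juh2 - Jut|` differ by at
most `|Ju - Juh2|`, which saturation bounds by `c * |Ju - Jut|` for `c = bh`, hence for every
`c ≥ bh`. So the estimator lies between `(1 - c) * |Ju - Jut|` and `(1 + c) * |Ju - Jut|`, and
dividing by the positive factors `1 - c` and `1 + c` gives both bounds (`two_sided_of_saturation`).
-/

theorem two_sided_of_saturation {u v w c : ℝ} (hc0 : 0 ≤ c) (hc1 : c < 1)
    (h : |u - w| ≤ c * |u - v|) :
    (1 / (1 + c)) * |w - v| ≤ |u - v| ∧ |u - v| ≤ (1 / (1 - c)) * |w - v| := by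
  have h1 : |w - v| ≤ |w - u| + |u - v| := abs_sub_le w u v
  have h2 : |u - v| ≤ |u - w| + |w - v| := abs_sub_le u w v
  rw [abs_sub_comm w u] at h1
  constructor
  · rw [one_div_mul_eq_div, div_le_iff₀ (by linarith)]
    linarith
  · rw [one_div_mul_eq_div, le_div_iff₀ (by linarith)]
    linarith

/-- Efficiency and reliability of η⁽²⁾ under the saturation assumption
(Theorem 4 of the paper). -/
theorem dwr_efficiency_reliability (Ju Jut Juh2 bh b0 : ℝ)
    (hbh : 0 ≤ bh) (hb : bh < b0) (hb0 : b0 < 1)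
    (hsat : |Ju - Juh2| < bh * |Ju - Jut|) :
    ((1 / (1 + bh)) * |Juh2 - Jut| ≤ |Ju - Jut| ∧
      |Ju - Jut| ≤ (1 / (1 - bh)) * |Juh2 - Jut|) ∧
    ((1 / (1 + b0)) * |Juh2 - Jut| ≤ |Ju - Jut| ∧
      |Ju - Jut| ≤ (1 / (1 - b0)) * |Juh2 - Jut|) := by
  have hsat0 : |Ju - Juh2| ≤ b0 * |Ju - Jut| :=
    hsat.le.trans (mul_le_mul_of_nonneg_right hb.le (abs_nonneg _))
  exact ⟨two_sided_of_saturation hbh (hb.trans hb0) hsat.le,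
    two_sided_of_saturation (hbh.trans hb.le) hb0 hsat0⟩
end

section
/- Let Ju, Jũ, Juh2, η_h, η_h^{(2)}, k, R, R2 be real numbers satisfying the two identities Ju − Jũ = η_h + k + R and Juh2 − Jũ = η_h^{(2)} + k + R2, and define γ := |Ju − Juh2| + |R − R2| + |k| + |R|. Then |η_h^{(2)}| − γ ≤ |Ju − Jũ| ≤ |η_h^{(2)}| + γ. -/
/-- Lemma 7 of the paper. -/
theorem dwr_practical_estimator_gamma_bounds (Ju Jut Juh2 etah etah2 k R R2 : ℝ)
    (h1 : Ju - Jut = etah + k + R)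
    (h2 : Juh2 - Jut = etah2 + k + R2) :
    |etah2| - (|Ju - Juh2| + |R - R2| + |k| + |R|) ≤ |Ju - Jut| ∧
    |Ju - Jut| ≤ |etah2| + (|Ju - Juh2| + |R - R2| + |k| + |R|) := by
  -- Writing `R2 = R - (R - R2)` splits the gap into the four terms of `γ`.
  have hgap : Ju - Jut - etah2 = (Ju - Juh2) - (R - R2) + k + R := by linarith
  have hbound : |Ju - Jut - etah2| ≤ |Ju - Juh2| + |R - R2| + |k| + |R| := by
    rw [hgap]
    have t1 := abs_add_le ((Ju - Juh2) - (R - R2) + k) R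
    have t2 := abs_add_le ((Ju - Juh2) - (R - R2)) k
    have t3 := abs_sub (Ju - Juh2) (R - R2)
    linarith
  have hrev := abs_le.mp (abs_abs_sub_abs_le (Ju - Jut) etah2)
  constructor <;> linarith [hrev.1, hrev.2]
end

section
/- Let Ju, Jũ, Juh2, η_h, η_h^{(2)}, k, R, R2 be real numbers satisfying the two identities Ju − Jũ = η_h + k + R and Juh2 − Jũ = η_h^{(2)} + k + R2, define γ := |Ju − Juh2| + |R − R2| + |k| + |R|, and let b, b₀ be real numbers with 0 ≤ b < b₀ < 1. If the strengthened saturation assumption γ < b·|Ju − Jũ| holds, then (1/(1 + b))·|η_h^{(2)}| ≤ |Ju − Jũ| ≤ (1/(1 − b))·|η_h^{(2)}| and (1/(1 + b₀))·|η_h^{(2)}| ≤ |Ju − Jũ| ≤ (1/(1 − b₀))·|η_h^{(2)}|. -/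
/-!
Subtracting the two error identities gives
`etah2 = (Ju - Jut) - (Ju - Juh2) + (R - R2) - k - R`, so by the triangle inequality `etah2`
differs from the true error `Ju - Jut` by at most the saturation quantity, hence by at most
`c * |Ju - Jut|` for every `c ≥ b`. A relative perturbation of size `c < 1` yields the two-sided
bound, which is applied with `c = b` and `c = b0`.
-/

theorem two_sided_of_abs_sub_le {e x c : ℝ} (hc0 : 0 ≤ c) (hc1 : c < 1)
    (h : |x - e| ≤ c * |e|) :
    (1 / (1 + c)) * |x| ≤ |e| ∧ |e| ≤ (1 / (1 - c)) * |x| := by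
  have hx : |x| - |e| ≤ |x - e| := abs_sub_abs_le_abs_sub x e
  have he : |e| - |x| ≤ |x - e| := abs_sub_comm e x ▸ abs_sub_abs_le_abs_sub e x
  constructor
  · rw [one_div_mul_eq_div, div_le_iff₀ (by linarith)]
    linarith
  · rw [one_div_mul_eq_div, le_div_iff₀ (by linarith)]
    linarith

/-- Efficiency and reliability of the practical estimator η_h⁽²⁾ under the
strengthened saturation assumption (Theorem 9 of the paper). -/
theorem dwr_practical_efficiency_reliability
    (Ju Jut Juh2 etah etah2 k R R2 b b0 : ℝ)
    (h1 : Ju - Jut = etah + k + R)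
    (h2 : Juh2 - Jut = etah2 + k + R2)
    (hb : 0 ≤ b) (hbb0 : b < b0) (hb0 : b0 < 1)
    (hsat : |Ju - Juh2| + |R - R2| + |k| + |R| < b * |Ju - Jut|) :
    ((1 / (1 + b)) * |etah2| ≤ |Ju - Jut| ∧
      |Ju - Jut| ≤ (1 / (1 - b)) * |etah2|) ∧
    ((1 / (1 + b0)) * |etah2| ≤ |Ju - Jut| ∧
      |Ju - Jut| ≤ (1 / (1 - b0)) * |etah2|) := by
  have hpert : |etah2 - (Ju - Jut)| ≤ |Ju - Juh2| + |R - R2| + |k| + |R| := by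
    have hsplit : etah2 - (Ju - Jut) = (R - R2) - (Ju - Juh2) - k - R := by linarith
    rw [hsplit]
    linarith [abs_sub (R - R2 - (Ju - Juh2) - k) R, abs_sub (R - R2 - (Ju - Juh2)) k,
      abs_sub (R - R2) (Ju - Juh2)]
  have hmono : b * |Ju - Jut| ≤ b0 * |Ju - Jut| := by gcongr
  exact ⟨two_sided_of_abs_sub_le hb (hbb0.trans hb0) (by linarith),
    two_sided_of_abs_sub_le (hb.trans hbb0.le) hb0 (by linarith)⟩
end

section
/- Let Ju, Jũ, Juh2, η_h, η_h^{(2)}, k, R, R2 be real numbers satisfying the two identities Ju − Jũ = η_h + k + R and Juh2 − Jũ = η_h^{(2)} + k + R2, define γ := |Ju − Juh2| + |R − R2| + |k| + |R|, and let b, b₀ be real numbers with 0 ≤ b < b₀ ≤ 1. If γ < b·|Ju − Jũ| holds, then (1/(1 + b₀))·|η_h^{(2)}| ≤ |Ju − Jũ|. -/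
/-- Efficiency of the practical estimator η_h⁽²⁾ for b₀ ∈ (0,1]
(Remark after Theorem 9 of the paper). -/
theorem dwr_practical_efficiency_weak
    (Ju Jut Juh2 etah etah2 k R R2 b b0 : ℝ)
    (h1 : Ju - Jut = etah + k + R)
    (h2 : Juh2 - Jut = etah2 + k + R2)
    (hb : 0 ≤ b) (hbb0 : b < b0) (hb0 : b0 ≤ 1)
    (hsat : |Ju - Juh2| + |R - R2| + |k| + |R| < b * |Ju - Jut|) :
    (1 / (1 + b0)) * |etah2| ≤ |Ju - Jut| := by
  -- `etah2 = (Ju - Jut) - (Ju - Juh2) + (R - R2) - k - R`, so `|etah2| ≤ |Ju - Jut| + γ`.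
  have htri : |etah2| ≤ |Ju - Jut| + (|Ju - Juh2| + |R - R2| + |k| + |R|) := by
    rw [abs_le]
    constructor <;>
      linarith [neg_abs_le (Ju - Jut), le_abs_self (Ju - Jut), neg_abs_le (Ju - Juh2),
        le_abs_self (Ju - Juh2), neg_abs_le (R - R2), le_abs_self (R - R2),
        neg_abs_le k, le_abs_self k, neg_abs_le R, le_abs_self R]
  have hmono : b * |Ju - Jut| ≤ b0 * |Ju - Jut| :=
    mul_le_mul_of_nonneg_right hbb0.le (abs_nonneg _)
  have hpos : 0 < 1 + b0 := by linarith
  rw [one_div_mul_eq_div, div_le_iff₀ hpos]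
  linarith
end

section
/- Let Ju, Jũ, Juh2 be real numbers with Ju ≠ Jũ, set η^{(2)} := Juh2 − Jũ and define the effectivity index I_eff := |η^{(2)}| / |Ju − Jũ|. If b₀ ∈ (0,1) and the saturation assumption |Ju − Juh2| < b₀·|Ju − Jũ| holds, then 1 − b₀ ≤ I_eff ≤ 1 + b₀. -/
/-- Bounds on the effectivity index I_eff (first part of Theorem 10 of the paper). -/
theorem dwr_effectivity_index_bounds (Ju Jut Juh2 b0 : ℝ)
    (hne : Ju ≠ Jut) (hb0 : 0 < b0) (hb0' : b0 < 1)
    (hsat : |Ju - Juh2| < b0 * |Ju - Jut|) :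
    1 - b0 ≤ |Juh2 - Jut| / |Ju - Jut| ∧ |Juh2 - Jut| / |Ju - Jut| ≤ 1 + b0 := by
  have hpos : 0 < |Ju - Jut| := abs_pos.mpr (sub_ne_zero.mpr hne)
  -- The triangle inequality through `Ju` and through `Juh2` gives the two bounds.
  have hupper := abs_sub_le Juh2 Ju Jut
  have hlower := abs_sub_le Ju Juh2 Jut
  rw [abs_sub_comm Juh2 Ju] at hupper
  rw [le_div_iff₀ hpos, div_le_iff₀ hpos]
  constructor <;> linarith
end

section
/- Let Ju, Jũ, Juh2, η_h, η_h^{(2)}, k, R, R2 be real numbers with Ju ≠ Jũ satisfying the two identities Ju − Jũ = η_h + k + R and Juh2 − Jũ = η_h^{(2)} + k + R2, define γ := |Ju − Juh2| + |R − R2| + |k| + |R| and the effectivity index I_eff,γ := |η_h^{(2)}| / |Ju − Jũ|. If b₀ ∈ (0,1) and the strengthened saturation assumption γ < b₀·|Ju − Jũ| holds, then 1 − b₀ ≤ I_eff,γ ≤ 1 + b₀. -/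
/-- Bounds on the effectivity index I_eff,γ (second part of Theorem 10 of the paper). -/
theorem dwr_effectivity_index_gamma_bounds
    (Ju Jut Juh2 etah etah2 k R R2 b0 : ℝ)
    (hne : Ju ≠ Jut)
    (h1 : Ju - Jut = etah + k + R)
    (h2 : Juh2 - Jut = etah2 + k + R2)
    (hb0 : 0 < b0) (hb0' : b0 < 1)
    (hsat : |Ju - Juh2| + |R - R2| + |k| + |R| < b0 * |Ju - Jut|) :
    1 - b0 ≤ |etah2| / |Ju - Jut| ∧ |etah2| / |Ju - Jut| ≤ 1 + b0 := by
  have hpos : 0 < |Ju - Jut| := abs_pos.mpr (sub_ne_zero.mpr hne)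
  -- The practical estimator differs from the true error by at most `γ`:
  -- `Ju - Jut - etah2 = (Ju - Juh2) - (R - R2) + k + R`.
  have hdiff : |Ju - Jut - etah2| ≤ |Ju - Juh2| + |R - R2| + |k| + |R| := by
    have e : Ju - Jut - etah2 = (Ju - Juh2) - (R - R2) + k + R := by linarith
    rw [e]
    linarith [abs_add_le ((Ju - Juh2) - (R - R2) + k) R,
      abs_add_le ((Ju - Juh2) - (R - R2)) k, abs_sub (Ju - Juh2) (R - R2)]
  have hlow := abs_sub_abs_le_abs_sub (Ju - Jut) etah2
  have hupp := abs_sub_abs_le_abs_sub etah2 (Ju - Jut)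
  rw [abs_sub_comm etah2] at hupp
  rw [le_div_iff₀ hpos, div_le_iff₀ hpos]
  constructor <;> linarith
end

section
/- Let (e_n), (d_n), (η_n), (θ_n), (k_n), (R_n), (S_n), (b_n) be sequences of real numbers with e_n ≠ 0 for all n, satisfying e_n = θ_n + k_n + R_n and d_n = η_n + k_n + S_n for all n. Define γ_n := |e_n − d_n| + |R_n − S_n| + |k_n| + |R_n|. If γ_n ≤ b_n·|e_n| for all n and b_n → 0 as n → ∞, then |η_n| / |e_n| → 1 as n → ∞. -/
/-!
Eliminating `S` from the identity for `d` gives `e - η = (e - d) + k + R - (R - S)`, so the triangle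
inequality bounds `|η - e|` by `γ`, hence by `b |e|`. The reverse triangle inequality, divided by
`|e| > 0`, then yields `| |η| / |e| - 1 | ≤ b`, and the right-hand side tends to zero.
-/

open Filter

/-- Convergence of the effectivity index I_eff,γ to 1
(second part of Theorem 10 of the paper). -/
theorem dwr_effectivity_index_gamma_tendsto_one
    (e d eta theta k R S b : ℕ → ℝ)
    (he : ∀ n, e n ≠ 0)
    (h1 : ∀ n, e n = theta n + k n + R n)
    (h2 : ∀ n, d n = eta n + k n + S n)
    (hgamma : ∀ n, |e n - d n| + |R n - S n| + |k n| + |R n| ≤ b n * |e n|)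
    (hb : Tendsto b atTop (nhds 0)) :
    Tendsto (fun n => |eta n| / |e n|) atTop (nhds 1) := by
  have key : ∀ n, |eta n - e n| ≤ b n * |e n| := fun n => by
    have h : eta n - e n = -(e n - d n) + (R n - S n) - k n - R n := by
      linarith [h2 n]
    rw [h]
    refine le_trans ?_ (hgamma n)
    calc |-(e n - d n) + (R n - S n) - k n - R n|
        ≤ |-(e n - d n) + (R n - S n) - k n| + |R n| := abs_sub _ _
      _ ≤ |-(e n - d n) + (R n - S n)| + |k n| + |R n| := by gcongr; exact abs_sub _ _
      _ ≤ |-(e n - d n)| + |R n - S n| + |k n| + |R n| := by gcongr; exact abs_add_le _ _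
      _ = |e n - d n| + |R n - S n| + |k n| + |R n| := by rw [abs_neg]
  rw [tendsto_iff_dist_tendsto_zero]
  refine squeeze_zero (fun _ => dist_nonneg) (fun n => ?_) hb
  have hpos : 0 < |e n| := abs_pos.mpr (he n)
  rw [Real.dist_eq, div_sub_one hpos.ne', abs_div, abs_abs, div_le_iff₀ hpos]
  exact (abs_abs_sub_abs_le_abs_sub _ _).trans (key n)
end

section
/- Let a, c, x, y, b be real numbers with b < 1. Assume the saturation conditions |a − c| < b·|a − x| and |a − c| < b·|a − y|, and assume that c does not lie in the closed interval with endpoints x and y (i.e. c ∉ [min(x,y), max(x,y)]). If |a − x| ≤ |a − y|, then |c − x| ≤ |c − y|. -/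
/-!
Since `b < 1`, saturation gives `|a - c| < |a - x|` and `|a - c| < |a - y|`. As `c` lies outside
the interval spanned by `x` and `y`, both points are on the same side of `c`, and because they are
farther from `a` than `c` is, both are on that same side of `a` as well. On one side of both `a`
and `c`, ordering by distance to `a` and ordering by distance to `c` agree.
-/

/-- Componentwise core of the no-error-cancellation proposition
(Section 5 of the paper). -/
theorem dwr_no_cancellation_componentwise (a c x y b : ℝ)
    (hb : b < 1)
    (hsatx : |a - c| < b * |a - x|)
    (hsaty : |a - c| < b * |a - y|)
    (hnotin : c ∉ Set.Icc (min x y) (max x y))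
    (hle : |a - x| ≤ |a - y|) :
    |c - x| ≤ |c - y| := by
  have hx : |a - c| < |a - x| :=
    hsatx.trans_le (mul_le_of_le_one_left (abs_nonneg _) hb.le)
  have hy : |a - c| < |a - y| :=
    hsaty.trans_le (mul_le_of_le_one_left (abs_nonneg _) hb.le)
  have hside : (c < x ∧ c < y) ∨ (x < c ∧ y < c) := by
    rw [Set.mem_Icc, not_and_or, not_le, not_le, lt_min_iff, max_lt_iff] at hnotin
    exact hnotin
  have h₁ := neg_abs_le (a - c)
  have h₂ := le_abs_self (a - c)
  rcases hside with ⟨hcx, hcy⟩ | ⟨hxc, hyc⟩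
  · have hax : a < x := by
      by_contra! h
      rw [abs_of_nonneg (sub_nonneg.2 h)] at hx
      linarith
    have hay : a < y := by
      by_contra! h
      rw [abs_of_nonneg (sub_nonneg.2 h)] at hy
      linarith
    rw [abs_of_neg (sub_neg.2 hax), abs_of_neg (sub_neg.2 hay)] at hle
    rw [abs_of_neg (sub_neg.2 hcx), abs_of_neg (sub_neg.2 hcy)]
    linarith
  · have hxa : x < a := by
      by_contra! h
      rw [abs_of_nonpos (sub_nonpos.2 h)] at hx
      linarith
    have hya : y < a := by
      by_contra! h
      rw [abs_of_nonpos (sub_nonpos.2 h)] at hy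
      linarith
    rw [abs_of_pos (sub_pos.2 hxa), abs_of_pos (sub_pos.2 hya)] at hle
    rw [abs_of_pos (sub_pos.2 hxc), abs_of_pos (sub_pos.2 hyc)]
    linarith
end

section
/- Let N be a natural number and let a, c, x, y : Fin N → ℝ be families of real numbers, and b : Fin N → ℝ with b i < 1 for all i. Assume for every i: |a i − c i| < b i·|a i − x i|, |a i − c i| < b i·|a i − y i|, c i ∉ [min(x i, y i), max(x i, y i)], and |a i − x i| ≤ |a i − y i|. Let 𝔈 : (Fin N → ℝ) → ℝ be monotone with respect to the componentwise order (i.e. if p i ≤ q i for all i then 𝔈(p) ≤ 𝔈(q)). Then 𝔈(fun i => |c i − x i|) ≤ 𝔈(fun i => |c i − y i|). -/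
/-!
By monotonicity of `E` the claim reduces to one coordinate. There `c ∉ [min x y, max x y]` puts
`x` and `y` strictly on the same side of `c`. Saturation for `x` with `b < 1` makes `c` strictly
closer to `a` than `x` is, hence also than `y` is. So `x` and `y` lie on that same side of `a` too, and
ordering their distances to `a` orders the points themselves, and therefore their distances to `c`.
-/

/-- The one-coordinate case, with saturation entering through `|a - c| < |a - x|`. -/
lemma abs_sub_le_abs_sub_of_not_mem_Icc {a c x y : ℝ}
    (hx : |a - c| < |a - x|)
    (hc : c ∉ Set.Icc (min x y) (max x y)) (hxy : |a - x| ≤ |a - y|) :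
    |c - x| ≤ |c - y| := by
  rw [Set.mem_Icc, not_and_or, not_le, not_le, lt_min_iff, max_lt_iff] at hc
  grind

/-- No error cancellation for the combined error functional built from a
monotone error-weighting function (Proposition of Section 5 of the paper). -/
theorem dwr_no_cancellation_multigoal (N : ℕ)
    (a c x y b : Fin N → ℝ)
    (hb : ∀ i, b i < 1)
    (hsatx : ∀ i, |a i - c i| < b i * |a i - x i|)
    (hsaty : ∀ i, |a i - c i| < b i * |a i - y i|)
    (hnotin : ∀ i, c i ∉ Set.Icc (min (x i) (y i)) (max (x i) (y i)))
    (hle : ∀ i, |a i - x i| ≤ |a i - y i|)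
    (E : (Fin N → ℝ) → ℝ)
    (hE : ∀ p q : Fin N → ℝ, (∀ i, p i ≤ q i) → E p ≤ E q) :
    E (fun i => |c i - x i|) ≤ E (fun i => |c i - y i|) := by
  exact hE _ _ fun i => abs_sub_le_abs_sub_of_not_mem_Icc
    ((hsatx i).trans_le (mul_le_of_le_one_left (abs_nonneg _) (hb i).le)) (hnotin i) (hle i)
end
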